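/- Let R ≥ 1, and for each i = 1,…,R let U_i ∈ ℂ^{N_i×K} (all with K columns), T_i(A) the K × K Grammian of the rows of U_i indexed by A ⊆ {1,…,N_i}, and P(L) = ‖T_1(L_1) ∘ ⋯ ∘ T_R(L_R)‖_F² for a tuple of selections L = (L_1,…,L_R). Let u_m for m ∈ ∏_i {1,…,N_i} denote the rows of the R-fold Khatri-Rao product U_1 ⊙ ⋯ ⊙ U_R, and let L_min = min_m ‖u_m‖₂², assumed strictly positive. Suppose L^g = (L_1^g,…,L_R^g) and L^⋆ = (L_1^⋆,…,L_R^⋆) are two tuples of selections with every L_i^g and every L_i^⋆ nonempty, satisfying the guarantee P(𝒩) − P(L^g) ≥ (1/2)(P(𝒩) − P(L^⋆)), where P(𝒩) = ‖T_1({1,…,N_1}) ∘ ⋯ ∘ T_R({1,…,N_R})‖_F². Then P(L^g) ≤ γ P(L^⋆) with γ = (1/2)((K/L_min²) P(𝒩) + 1). -/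

import Mathlib

open scoped BigOperators

/-- The `K × K` Grammian of the rows of `U` indexed by `A`:
`T(A) = ∑_{j∈A} u_jᴴ u_j`. -/
noncomputable def gram {n K : ℕ} (U : Matrix (Fin n) (Fin K) ℂ)
    (A : Finset (Fin n)) : Matrix (Fin K) (Fin K) ℂ :=
  Matrix.of fun a b => ∑ j ∈ A, star (U j a) * U j b

/-- `P(L) = ‖T_1(L_1) ∘ ⋯ ∘ T_R(L_R)‖_F²` for a tuple of selections `L`. -/
noncomputable def P {R : ℕ} {N : Fin R → ℕ} {K : ℕ}
    (U : ∀ i, Matrix (Fin (N i)) (Fin K) ℂ)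
    (L : ∀ i, Finset (Fin (N i))) : ℝ :=
  ∑ a, ∑ b, ‖(∏ i, gram (U i) (L i) a b)‖ ^ 2

/-!
The Hadamard product of the Grammians is the Grammian of the selected Khatri-Rao rows, so its trace
is the total energy `E` of those rows and Cauchy–Schwarz on the diagonal gives the Welch bound
`E² ≤ K P(L)`. Since `L_min ≤ E` for `L = L^⋆`, this yields `1 ≤ (K / L_min²) P(L^⋆)`; the guarantee
reads `P(L^g) ≤ (1/2) (P(𝒩) + P(L^⋆))`, and multiplying the term `P(𝒩)` by this factor gives the
claim.
-/

/-- The Khatri-Rao (column-wise Kronecker) product `⨀ i, U i` of a finite family of matrices with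
common column index type; its rows are indexed by tuples of row indices. -/
def khatriRao {ι κ α : Type*} [Fintype ι] [CommMonoid α] {n : ι → Type*}
    (U : ∀ i, Matrix (n i) κ α) : Matrix (∀ i, n i) κ α :=
  Matrix.of fun m k => ∏ i, U i (m i) k

theorem sq_norm_trace_le_card_mul_sum_sq_norm {n E : Type*} [Fintype n]
    [SeminormedAddCommGroup E] (A : Matrix n n E) :
    ‖A.trace‖ ^ 2 ≤ Fintype.card n * ∑ a, ∑ b, ‖A a b‖ ^ 2 := by
  calc ‖A.trace‖ ^ 2
      ≤ (∑ a, ‖A a a‖) ^ 2 := by gcongr; exact norm_sum_le _ _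
    _ ≤ Fintype.card n * ∑ a, ‖A a a‖ ^ 2 := sq_sum_le_card_mul_sum_sq
    _ ≤ Fintype.card n * ∑ a, ∑ b, ‖A a b‖ ^ 2 := by
        gcongr with a
        exact Finset.single_le_sum (f := fun b => ‖A a b‖ ^ 2)
          (fun b _ => sq_nonneg _) (Finset.mem_univ a)

section FramePotential

variable {R K : ℕ} {N : Fin R → ℕ} (U : ∀ i, Matrix (Fin (N i)) (Fin K) ℂ)
  (L : ∀ i, Finset (Fin (N i)))

theorem P_nonneg : 0 ≤ P U L :=
  Finset.sum_nonneg fun _ _ => Finset.sum_nonneg fun _ _ => sq_nonneg _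

theorem prod_gram_apply_eq_sum_khatriRao (a b : Fin K) :
    ∏ i, gram (U i) (L i) a b =
      ∑ m ∈ Fintype.piFinset L, star (khatriRao U m a) * khatriRao U m b := by
  simp only [gram, khatriRao, Matrix.of_apply, Finset.prod_univ_sum, Finset.prod_mul_distrib,
    star_prod]

theorem sum_prod_gram_apply_self :
    ∑ a, ∏ i, gram (U i) (L i) a a =
      ((∑ m ∈ Fintype.piFinset L, ∑ k, ‖khatriRao U m k‖ ^ 2 : ℝ) : ℂ) := by
  simp only [prod_gram_apply_eq_sum_khatriRao]
  rw [Finset.sum_comm]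
  push_cast
  exact Finset.sum_congr rfl fun m _ => Finset.sum_congr rfl fun k _ => Complex.conj_mul' _

theorem sq_sum_sq_norm_khatriRao_le_mul_P :
    (∑ m ∈ Fintype.piFinset L, ∑ k, ‖khatriRao U m k‖ ^ 2) ^ 2 ≤ K * P U L := by
  have trace_bound := sq_norm_trace_le_card_mul_sum_sq_norm
    (Matrix.of fun a b => ∏ i, gram (U i) (L i) a b)
  simpa only [P, Matrix.trace, Matrix.diag_apply, Matrix.of_apply, sum_prod_gram_apply_self,
    Complex.norm_real, Real.norm_eq_abs, sq_abs, Fintype.card_fin] using trace_bound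

variable {L}

theorem le_sum_sq_norm_khatriRao (hL : ∀ i, (L i).Nonempty) {ℓ : ℝ}
    (hℓ : ∀ m ∈ Fintype.piFinset L, ℓ ≤ ∑ k, ‖khatriRao U m k‖ ^ 2) :
    ℓ ≤ ∑ m ∈ Fintype.piFinset L, ∑ k, ‖khatriRao U m k‖ ^ 2 := by
  obtain ⟨m, hm⟩ := Fintype.piFinset_nonempty.mpr hL
  exact (hℓ m hm).trans <| Finset.single_le_sum (f := fun m => ∑ k, ‖khatriRao U m k‖ ^ 2)
    (fun _ _ => Finset.sum_nonneg fun _ _ => sq_nonneg _) hm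

end FramePotential

theorem frame_potential_near_optimality_diagonal_general {R K : ℕ} {N : Fin R → ℕ}
    (U : ∀ i, Matrix (Fin (N i)) (Fin K) ℂ) (Lg Lstar : ∀ i, Finset (Fin (N i)))
    {c ℓ : ℝ} (hc : c ≤ 1) (hpos : 0 < ℓ)
    (hℓ : ℓ ≤ ∑ m ∈ Fintype.piFinset Lstar, ∑ k, ‖khatriRao U m k‖ ^ 2)
    (hguarantee :
      P U (fun _ => Finset.univ) - P U Lg ≥ c * (P U (fun _ => Finset.univ) - P U Lstar)) :
    P U Lg ≤ ((1 - c) * ((K : ℝ) / ℓ ^ 2 * P U (fun _ => Finset.univ)) + c) * P U Lstar := by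
  set PN := P U fun _ => Finset.univ
  have welch_ratio : 1 ≤ (K : ℝ) / ℓ ^ 2 * P U Lstar := by
    rw [div_mul_eq_mul_div, one_le_div (by positivity)]
    exact (pow_le_pow_left₀ hpos.le hℓ 2).trans (sq_sum_sq_norm_khatriRao_le_mul_P U Lstar)
  have weight_nonneg : 0 ≤ (1 - c) * PN := mul_nonneg (sub_nonneg.mpr hc) (P_nonneg U _)
  calc P U Lg
      ≤ (1 - c) * PN + c * P U Lstar := by linarith
    _ ≤ (1 - c) * PN * (K / ℓ ^ 2 * P U Lstar) + c * P U Lstar :=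
        add_le_add_left (le_mul_of_one_le_right weight_nonneg welch_ratio) _
    _ = ((1 - c) * (K / ℓ ^ 2 * PN) + c) * P U Lstar := by ring

/-- Near-optimality with respect to the frame potential (diagonal core case):
if the tuples of nonempty selections `L^g` and `L^⋆` satisfy the near-optimality
guarantee `P(𝒩) − P(L^g) ≥ (1/2)(P(𝒩) − P(L^⋆))`, then
`P(L^g) ≤ γ P(L^⋆)` with `γ = (1/2)((K/L_min²) P(𝒩) + 1)`, where `L_min` is the
minimum squared row norm of the Khatri-Rao product `U_1 ⊙ ⋯ ⊙ U_R`. -/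
theorem frame_potential_near_optimality_diagonal (R : ℕ) (hR : 1 ≤ R)
    (N : Fin R → ℕ) (K : ℕ)
    (U : ∀ i, Matrix (Fin (N i)) (Fin K) ℂ)
    (Lg Lstar : ∀ i, Finset (Fin (N i)))
    (hg : ∀ i, (Lg i).Nonempty) (hstar : ∀ i, (Lstar i).Nonempty)
    (Lmin : ℝ) (hpos : 0 < Lmin)
    (hLmin : IsLeast {x : ℝ | ∃ m : ∀ i, Fin (N i),
      x = ∑ k : Fin K, ‖(∏ i, U i (m i) k)‖ ^ 2} Lmin)
    (hguarantee :
      P U (fun _ => Finset.univ) - P U Lg ≥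
        (1 / 2) * (P U (fun _ => Finset.univ) - P U Lstar)) :
    P U Lg ≤
      (1 / 2) * (((K : ℝ) / Lmin ^ 2) * P U (fun _ => Finset.univ) + 1) *
        P U Lstar := by
  have := frame_potential_near_optimality_diagonal_general U Lg Lstar (by norm_num) hpos
    (le_sum_sq_norm_khatriRao U hstar fun m _ => hLmin.2 ⟨m, rfl⟩) hguarantee
  linarith
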